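/- Define f : ℝ⁶ → ℝ⁶ by f₁(x) = −0.05·x₃x₅ + 0.05·x₂x₆; f₂(x) = −0.05·x₆ + 0.05·x₃x₄ − 0.05·x₁x₆; f₃(x) = 0.05·x₅ − 0.05·x₂x₄ + 0.05·x₁x₅; f₄(x) = −0.016·x₄; f₅(x) = −0.00226·x₃ − 0.016·x₅ + 0.0133·x₄x₆ − 0.00807·x₂²x₃ − 0.00799·x₃³ + 0.00389·x₂⁴x₃ + 0.00389·x₃⁵; f₆(x) = 0.00226·x₂ − 0.016·x₆ − 0.0133·x₄x₅ + 0.00799·x₂³ + 0.00807·x₂x₃² − 0.00389·x₂⁵ − 0.00389·x₂x₃⁴, let h(x) = 2x₁ + x₁² + x₂² + x₃², and let x₂* = (−2,0,0,0,0,0). Then there exist v ∈ ℝ⁶ with v ≠ 0 and ⟨∇h(x₂*), v⟩ = 0, and λ > 0, such that Df(x₂*) v = λ v; that is, the Jacobian of f at the antipodal equilibrium has a positive real eigenvalue with eigenvector tangent to the constraint manifold H = {x : h(x) = 0}. -/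

import Mathlib

open scoped RealInnerProductSpace

/-- The transformed closed-loop aerostability dynamics of Example 1, as a vector
field on Euclidean 6-space. -/
noncomputable def aeroF (x : EuclideanSpace ℝ (Fin 6)) : EuclideanSpace ℝ (Fin 6) :=
  (EuclideanSpace.equiv (Fin 6) ℝ).symm
  ![-0.05 * (x 2 * x 4) + 0.05 * (x 1 * x 5),
    -0.05 * x 5 + 0.05 * (x 2 * x 3) - 0.05 * (x 0 * x 5),
    0.05 * x 4 - 0.05 * (x 1 * x 3) + 0.05 * (x 0 * x 4),
    -0.016 * x 3,
    -0.00226 * x 2 - 0.016 * x 4 + 0.0133 * (x 3 * x 5) - 0.00807 * (x 1 ^ 2 * x 2)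
      - 0.00799 * x 2 ^ 3 + 0.00389 * (x 1 ^ 4 * x 2) + 0.00389 * x 2 ^ 5,
    0.00226 * x 1 - 0.016 * x 5 - 0.0133 * (x 3 * x 4) + 0.00799 * x 1 ^ 3
      + 0.00807 * (x 1 * x 2 ^ 2) - 0.00389 * x 1 ^ 5 - 0.00389 * (x 1 * x 2 ^ 4)]

/-- The unit-norm constraint in shifted coordinates. -/
def aeroH (x : EuclideanSpace ℝ (Fin 6)) : ℝ := 2 * x 0 + x 0 ^ 2 + x 1 ^ 2 + x 2 ^ 2

/-- The antipodal equilibrium `x₂* = (−2,0,0,0,0,0)`. -/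
noncomputable def xstar2 : EuclideanSpace ℝ (Fin 6) :=
  (EuclideanSpace.equiv (Fin 6) ℝ).symm ![-2, 0, 0, 0, 0, 0]

/-!
At the antipodal equilibrium the coordinates `x 1` and `x 5` span an invariant plane of the
Jacobian, on which it acts by `!![0, 0.05; 0.00226, -0.016]`. The determinant of this `2 × 2` block
is negative, so its characteristic polynomial is negative at `0` and has a positive root. The
gradient of the constraint there is a multiple of the first basis vector, hence orthogonal to the
whole plane.
-/

section Matrix

open Matrix Module.End

variable {m n : Type*} [Fintype m] [Fintype n]

theorem exists_pos_hasEigenvalue_of_det_neg_lt_zero [DecidableEq n] {A : Matrix n n ℝ}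
    (hA : (-A).det < 0) : ∃ μ : ℝ, 0 < μ ∧ HasEigenvalue (toLin' A) μ := by
  simp_rw [hasEigenvalue_iff_isRoot_charpoly, charpoly_toLin']
  have eval_zero : A.charpoly.eval 0 < 0 := by simpa [eval_charpoly] using hA
  contrapose! eval_zero with no_pos_root
  exact Polynomial.zero_le_eval_of_roots_le_of_leadingCoeff_nonneg
    (fun μ hμ => not_lt.mp fun μ_pos => no_pos_root μ μ_pos hμ)
    (by simp [A.charpoly_monic.leadingCoeff])

theorem mulVec_extend_zero {R : Type*} [NonUnitalNonAssocSemiring R] {A : Matrix n n R}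
    {e : m → n} (he : e.Injective) (hA : ∀ i ∉ Set.range e, ∀ j, A i (e j) = 0) (w : m → R) :
    A *ᵥ Function.extend e w 0 = Function.extend e (A.submatrix e e *ᵥ w) 0 := by
  have mulVec_apply (i : n) : (A *ᵥ Function.extend e w 0) i = ∑ j, A i (e j) * w j := by
    refine (Fintype.sum_of_injective e he _ _ (fun k hk => ?_) fun j => ?_).symm
    · simp [Function.extend_apply' _ _ _ hk]
    · rw [he.extend_apply]
  ext i
  rw [mulVec_apply]
  by_cases hi : i ∈ Set.range e
  · obtain ⟨k, rfl⟩ := hi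
    rw [he.extend_apply]
    rfl
  · simp [Function.extend_apply' _ _ _ hi, hA i hi]

theorem hasEigenvector_extend_zero {R : Type*} [CommRing R] [DecidableEq m] [DecidableEq n]
    {A : Matrix n n R} {e : m → n} (he : e.Injective)
    (hA : ∀ i ∉ Set.range e, ∀ j, A i (e j) = 0) {μ : R} {w : m → R}
    (hw : HasEigenvector (toLin' (A.submatrix e e)) μ w) :
    HasEigenvector (toLin' A) μ (Function.extend e w 0) := by
  rw [hasEigenvector_iff, mem_eigenspace_iff, toLin'_apply] at hw ⊢
  refine ⟨?_, fun h => hw.2 ?_⟩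
  · rw [mulVec_extend_zero he hA, hw.1]
    simpa using Function.extend_smul μ e w 0
  · rw [← Function.extend_comp he w 0, h, Pi.zero_comp]

end Matrix

theorem hasFDerivAt_of_lineDeriv_eq {𝕜 E F : Type*} [NontriviallyNormedField 𝕜]
    [NormedAddCommGroup E] [NormedSpace 𝕜 E] [NormedAddCommGroup F] [NormedSpace 𝕜 F]
    {f : E → F} {f' : E →L[𝕜] F} {x : E} (hf : DifferentiableAt 𝕜 f x)
    (h : ∀ v, lineDeriv 𝕜 f x v = f' v) : HasFDerivAt f f' x :=
  hf.hasFDerivAt.congr_fderiv <| ContinuousLinearMap.ext fun v =>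
    hf.lineDeriv_eq_fderiv.symm.trans (h v)

theorem hasFDerivAt_euclidean {𝕜 E ι : Type*} [RCLike 𝕜] [NormedAddCommGroup E]
    [NormedSpace 𝕜 E] [Finite ι] {f : E → EuclideanSpace 𝕜 ι}
    {f' : E →L[𝕜] EuclideanSpace 𝕜 ι} {x : E} :
    HasFDerivAt f f' x ↔ ∀ i, HasFDerivAt (fun y => f y i) (EuclideanSpace.proj i ∘L f') x := by
  simp_rw [← hasFDerivWithinAt_univ, hasFDerivWithinAt_euclidean]

theorem hasGradientAt_aeroH (x : EuclideanSpace ℝ (Fin 6)) :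
    HasGradientAt aeroH !₂[2 + 2 * x 0, 2 * x 1, 2 * x 2, 0, 0, 0] x := by
  refine hasFDerivAt_of_lineDeriv_eq (by unfold aeroH; fun_prop) fun v => ?_
  simp (disch := fun_prop) only [lineDeriv, aeroH, deriv_fun_add, deriv_fun_pow]
  simp [PiLp.inner_apply, Fin.sum_univ_succ]
  ring

/-- The Jacobian matrix of `aeroF` at `x`: the `i`-th row holds the partial derivatives of the
`i`-th component. -/
noncomputable def aeroJacobian (x : EuclideanSpace ℝ (Fin 6)) : Matrix (Fin 6) (Fin 6) ℝ :=
  !![0, 0.05 * x 5, -0.05 * x 4, 0, -0.05 * x 2, 0.05 * x 1;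
    -0.05 * x 5, 0, 0.05 * x 3, 0.05 * x 2, 0, -0.05 * (1 + x 0);
    0.05 * x 4, -0.05 * x 3, 0, -0.05 * x 1, 0.05 * (1 + x 0), 0;
    0, 0, 0, -0.016, 0, 0;
    0, -(2 * 0.00807) * (x 1 * x 2) + 4 * 0.00389 * (x 1 ^ 3 * x 2),
      -0.00226 - 0.00807 * x 1 ^ 2 - 3 * 0.00799 * x 2 ^ 2 + 0.00389 * x 1 ^ 4
        + 5 * 0.00389 * x 2 ^ 4,
      0.0133 * x 5, -0.016, 0.0133 * x 3;
    0, 0.00226 + 3 * 0.00799 * x 1 ^ 2 + 0.00807 * x 2 ^ 2 - 5 * 0.00389 * x 1 ^ 4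
        - 0.00389 * x 2 ^ 4,
      2 * 0.00807 * (x 1 * x 2) - 4 * 0.00389 * (x 1 * x 2 ^ 3),
      -0.0133 * x 4, -0.0133 * x 3, -0.016]

theorem hasFDerivAt_aeroF (x : EuclideanSpace ℝ (Fin 6)) :
    HasFDerivAt aeroF (Matrix.toEuclideanCLM (𝕜 := ℝ) (aeroJacobian x)) x := by
  refine hasFDerivAt_euclidean.mpr fun i => hasFDerivAt_of_lineDeriv_eq ?_ fun v => ?_
  · fin_cases i <;>
      simp only [aeroF, PiLp.continuousLinearEquiv_symm_apply, Fin.zero_eta, Fin.mk_one,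
        Fin.reduceFinMk, Matrix.cons_val] <;>
      fun_prop
  · fin_cases i <;>
      simp (disch := fun_prop) [lineDeriv, aeroF, aeroJacobian, deriv_fun_add, deriv_fun_sub,
        deriv_fun_mul, deriv_fun_pow, Matrix.mulVec, dotProduct, Fin.sum_univ_succ] <;>
      ring

theorem aeroJacobian_xstar2 :
    aeroJacobian xstar2 =
      !![0, 0, 0, 0, 0, 0;
        0, 0, 0, 0, 0, 0.05;
        0, 0, 0, 0, -0.05, 0;
        0, 0, 0, -0.016, 0, 0;
        0, 0, -0.00226, 0, -0.016, 0;
        0, 0.00226, 0, 0, 0, -0.016] := by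
  ext i j
  fin_cases i <;> fin_cases j <;> simp [aeroJacobian, xstar2] <;> norm_num

theorem exists_pos_hasEigenvector_aeroJacobian_xstar2 :
    ∃ μ : ℝ, 0 < μ ∧ ∃ v : Fin 6 → ℝ, v 0 = 0 ∧
      Module.End.HasEigenvector (Matrix.toLin' (aeroJacobian xstar2)) μ v := by
  let e : Fin 2 → Fin 6 := ![1, 5]
  have he : e.Injective := by decide
  have invariant : ∀ i ∉ Set.range e, ∀ j, aeroJacobian xstar2 i (e j) = 0 := by
    simp [aeroJacobian_xstar2, e, Fin.forall_fin_succ]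
  have block_eq : (aeroJacobian xstar2).submatrix e e = !![0, 0.05; 0.00226, -0.016] := by
    ext i j
    fin_cases i <;> fin_cases j <;> simp [aeroJacobian_xstar2, e]
  have det_block : (-(aeroJacobian xstar2).submatrix e e).det < 0 := by
    norm_num [block_eq, Matrix.det_fin_two]
  obtain ⟨μ, μ_pos, hμ⟩ := exists_pos_hasEigenvalue_of_det_neg_lt_zero det_block
  obtain ⟨w, hw⟩ := hμ.exists_hasEigenvector
  exact ⟨μ, μ_pos, Function.extend e w 0, Function.extend_apply' _ _ _ (by decide),
    hasEigenvector_extend_zero he invariant hw⟩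

/-- The Jacobian of the closed-loop aerostability dynamics at the antipodal
equilibrium has a positive real eigenvalue with eigenvector tangent to the
constraint manifold `H = {x | aeroH x = 0}`. -/
theorem stmt_15 :
    ∃ v : EuclideanSpace ℝ (Fin 6), v ≠ 0 ∧ ⟪gradient aeroH xstar2, v⟫ = 0 ∧
      ∃ lam : ℝ, 0 < lam ∧ fderiv ℝ aeroF xstar2 v = lam • v := by
  obtain ⟨μ, μ_pos, v, v_zero, hv⟩ := exists_pos_hasEigenvector_aeroJacobian_xstar2
  refine ⟨WithLp.toLp 2 v, ?_, ?_, μ, μ_pos, ?_⟩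
  · simpa using hv.2
  · rw [(hasGradientAt_aeroH xstar2).gradient]
    simp [PiLp.inner_apply, Fin.sum_univ_succ, xstar2, v_zero]
  · rw [(hasFDerivAt_aeroF xstar2).fderiv, Matrix.toEuclideanCLM_toLp, ← WithLp.toLp_smul,
      ← Matrix.toLin'_apply, hv.apply_eq_smul]
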